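/- Let E ∈ GL(m,k), F ∈ GL(n,k), and let q ∈ k* satisfy q² + tr(E·ᵀE⁻¹)·q + 1 = 0. Then there exists an algebra homomorphism δ : B(E,F) → B(E,E_q) ⊗ B(E_q,F) with δ(z_{ij}) = Σ_{k=1}^2 v_{ik} ⊗ w_{kj} for all 1 ≤ i ≤ m, 1 ≤ j ≤ n, where (v_{ik}) and (w_{kj}) denote the matrices of generators of B(E,E_q) and B(E_q,F) respectively. -/

import Mathlib

open scoped TensorProduct
open Matrix

noncomputable section

variable (k : Type) [Field k]

/-- The matrix of free generators of the free algebra on `Fin m × Fin n`. -/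
def gens (m n : ℕ) : Matrix (Fin m) (Fin n) (FreeAlgebra k (Fin m × Fin n)) :=
  Matrix.of fun i j => FreeAlgebra.ι k (i, j)

/-- A scalar matrix viewed as a matrix over a `k`-algebra. -/
def liftMat {A : Type} [Semiring A] [Algebra k A] {p q : ℕ}
    (M : Matrix (Fin p) (Fin q) k) : Matrix (Fin p) (Fin q) A :=
  M.map (algebraMap k A)

/-- The defining relations of the algebra `B(E,F)`:
`F⁻¹ * ᵀz * E * z = 1` and `z * F⁻¹ * ᵀz * E = 1`. -/
inductive BRel {m n : ℕ} (E : Matrix (Fin m) (Fin m) k) (F : Matrix (Fin n) (Fin n) k) :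
    FreeAlgebra k (Fin m × Fin n) → FreeAlgebra k (Fin m × Fin n) → Prop
  | left (i j : Fin n) : BRel E F
      ((liftMat k (A := FreeAlgebra k (Fin m × Fin n)) F⁻¹ * (gens k m n)ᵀ * liftMat k (A := FreeAlgebra k (Fin m × Fin n)) E * gens k m n :
          Matrix (Fin n) (Fin n) (FreeAlgebra k (Fin m × Fin n))) i j)
      ((1 : Matrix (Fin n) (Fin n) (FreeAlgebra k (Fin m × Fin n))) i j)
  | right (i j : Fin m) : BRel E F
      ((gens k m n * liftMat k (A := FreeAlgebra k (Fin m × Fin n)) F⁻¹ * (gens k m n)ᵀ * liftMat k (A := FreeAlgebra k (Fin m × Fin n)) E :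
          Matrix (Fin m) (Fin m) (FreeAlgebra k (Fin m × Fin n))) i j)
      ((1 : Matrix (Fin m) (Fin m) (FreeAlgebra k (Fin m × Fin n))) i j)

/-- The algebra `B(E,F)`.  The Hopf algebra `B(E)` is `BB k E E`. -/
abbrev BB {m n : ℕ} (E : Matrix (Fin m) (Fin m) k) (F : Matrix (Fin n) (Fin n) k) :=
  RingQuot (BRel k E F)

/-- The matrix of generators of `B(E,F)`. -/
def ZMat {m n : ℕ} (E : Matrix (Fin m) (Fin m) k) (F : Matrix (Fin n) (Fin n) k) :
    Matrix (Fin m) (Fin n) (BB k E F) :=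
  Matrix.of fun i j => RingQuot.mkAlgHom k (BRel k E F) (gens k m n i j)
/-- The matrix `E_q` with rows `(0, 1)` and `(−q⁻¹, 0)`, so that `B(E_q) = O(SL_q(2))`. -/
def Eqm (q : k) : Matrix (Fin 2) (Fin 2) k := !![0, 1; -q⁻¹, 0]

/-!
For nondegenerate `E` and `F`, the relations of `B(E,F)` say that `ᵀz E z = F` and
`z F⁻¹ ᵀz = E⁻¹`: the matrix `z` is a universal isometry between the bilinear forms `E` and `F`.
Two isometries `E → G → F` whose entries commute with each other compose to an isometry `E → F`,
so the product of the generator matrices of `B(E,G)` and `B(G,F)`, taken in the tensor product,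
satisfies the relations of `B(E,F)`. The matrix `E_q` is one such nondegenerate `G`.
-/

section

variable {k}

theorem transpose_mul_of_commute {l m n R : Type*} [Fintype m] [NonUnitalNonAssocSemiring R]
    {M : Matrix l m R} {N : Matrix m n R} (hMN : ∀ i j s, Commute (M i j) (N j s)) :
    (M * N)ᵀ = Nᵀ * Mᵀ := by
  ext s i
  simp only [transpose_apply, mul_apply]
  exact Finset.sum_congr rfl fun j _ => hMN i j s

variable {A B : Type} [Semiring A] [Algebra k A] [Semiring B] [Algebra k B] {m n p : ℕ}

theorem liftMat_map (φ : A →ₐ[k] B) (M : Matrix (Fin m) (Fin n) k) :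
    (liftMat k (A := A) M).map φ = liftMat k (A := B) M := by
  ext i j
  exact φ.commutes (M i j)

theorem liftMat_mul (M : Matrix (Fin m) (Fin n) k) (N : Matrix (Fin n) (Fin p) k) :
    liftMat k (A := A) (M * N) = liftMat k (A := A) M * liftMat k (A := A) N :=
  Matrix.map_mul

theorem liftMat_one : liftMat k (A := A) (1 : Matrix (Fin n) (Fin n) k) = 1 :=
  Matrix.map_one _ (map_zero _) (map_one _)

theorem liftMat_mul_liftMat_inv {M : Matrix (Fin n) (Fin n) k} (hM : IsUnit M.det) :
    liftMat k (A := A) M * liftMat k (A := A) M⁻¹ = 1 := by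
  rw [← liftMat_mul, mul_nonsing_inv M hM, liftMat_one]

theorem liftMat_inv_mul_liftMat {M : Matrix (Fin n) (Fin n) k} (hM : IsUnit M.det) :
    liftMat k (A := A) M⁻¹ * liftMat k (A := A) M = 1 := by
  rw [← liftMat_mul, nonsing_inv_mul M hM, liftMat_one]

theorem liftMat_inv_mul_eq_one_iff {M : Matrix (Fin n) (Fin n) k} (hM : IsUnit M.det)
    {X : Matrix (Fin n) (Fin n) A} : liftMat k (A := A) M⁻¹ * X = 1 ↔ X = liftMat k (A := A) M :=
  ⟨fun h => (left_inv_eq_right_inv (liftMat_mul_liftMat_inv hM) h).symm,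
    fun h => h ▸ liftMat_inv_mul_liftMat hM⟩

theorem mul_liftMat_eq_one_iff {M : Matrix (Fin n) (Fin n) k} (hM : IsUnit M.det)
    {X : Matrix (Fin n) (Fin n) A} : X * liftMat k (A := A) M = 1 ↔ X = liftMat k (A := A) M⁻¹ :=
  ⟨fun h => left_inv_eq_right_inv h (liftMat_mul_liftMat_inv hM),
    fun h => h ▸ liftMat_inv_mul_liftMat hM⟩

variable {E : Matrix (Fin m) (Fin m) k} {F : Matrix (Fin n) (Fin n) k}
  {G : Matrix (Fin p) (Fin p) k}

/-- A matrix `Z` over a `k`-algebra is an isometry from the bilinear form `E` to the bilinear form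
`F`. For invertible `E` and `F` these are the defining relations of `B(E,F)`: the first condition
says that `F⁻¹ ᵀZ E` is a left inverse of `Z`, the second that it is a right inverse. -/
structure IsIsometryMatrix (E : Matrix (Fin m) (Fin m) k) (F : Matrix (Fin n) (Fin n) k)
    (Z : Matrix (Fin m) (Fin n) A) : Prop where
  transpose_mul_mul : Zᵀ * liftMat k (A := A) E * Z = liftMat k (A := A) F
  mul_mul_transpose : Z * liftMat k (A := A) F⁻¹ * Zᵀ = liftMat k (A := A) E⁻¹

theorem isIsometryMatrix_iff (hE : IsUnit E.det) (hF : IsUnit F.det)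
    {Z : Matrix (Fin m) (Fin n) A} :
    IsIsometryMatrix E F Z ↔
      liftMat k (A := A) F⁻¹ * Zᵀ * liftMat k (A := A) E * Z = 1 ∧
      Z * liftMat k (A := A) F⁻¹ * Zᵀ * liftMat k (A := A) E = 1 := by
  rw [mul_liftMat_eq_one_iff hE, Matrix.mul_assoc (liftMat k F⁻¹), Matrix.mul_assoc (liftMat k F⁻¹),
    liftMat_inv_mul_eq_one_iff hF]
  exact ⟨fun h => ⟨h.1, h.2⟩, fun h => ⟨h.1, h.2⟩⟩

namespace IsIsometryMatrix

theorem map {Z : Matrix (Fin m) (Fin n) A} (hZ : IsIsometryMatrix E F Z) (φ : A →ₐ[k] B) :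
    IsIsometryMatrix E F (Z.map φ) where
  transpose_mul_mul := by
    simpa only [Matrix.map_mul, liftMat_map, transpose_map]
      using congrArg (Matrix.map · φ) hZ.transpose_mul_mul
  mul_mul_transpose := by
    simpa only [Matrix.map_mul, liftMat_map, transpose_map]
      using congrArg (Matrix.map · φ) hZ.mul_mul_transpose

theorem mul {V : Matrix (Fin m) (Fin p) A} {W : Matrix (Fin p) (Fin n) A}
    (hV : IsIsometryMatrix E G V) (hW : IsIsometryMatrix G F W)
    (hVW : ∀ i j s, Commute (V i j) (W j s)) : IsIsometryMatrix E F (V * W) where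
  transpose_mul_mul := by
    calc (V * W)ᵀ * liftMat k (A := A) E * (V * W)
        = Wᵀ * (Vᵀ * liftMat k (A := A) E * V) * W := by
          simp only [transpose_mul_of_commute hVW, Matrix.mul_assoc]
      _ = liftMat k (A := A) F := by rw [hV.transpose_mul_mul, hW.transpose_mul_mul]
  mul_mul_transpose := by
    calc V * W * liftMat k (A := A) F⁻¹ * (V * W)ᵀ
        = V * (W * liftMat k (A := A) F⁻¹ * Wᵀ) * Vᵀ := by
          simp only [transpose_mul_of_commute hVW, Matrix.mul_assoc]
      _ = liftMat k (A := A) E⁻¹ := by rw [hW.mul_mul_transpose, hV.mul_mul_transpose]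

end IsIsometryMatrix

theorem forall_BRel_iff (φ : FreeAlgebra k (Fin m × Fin n) →ₐ[k] A) :
    (∀ ⦃x y⦄, BRel k E F x y → φ x = φ y) ↔
      liftMat k (A := A) F⁻¹ * ((gens k m n).map φ)ᵀ * liftMat k (A := A) E *
        (gens k m n).map φ = 1 ∧
      (gens k m n).map φ * liftMat k (A := A) F⁻¹ * ((gens k m n).map φ)ᵀ *
        liftMat k (A := A) E = 1 := by
  simp only [← liftMat_map φ, ← transpose_map, ← Matrix.map_mul,
    ← Matrix.map_one φ (map_zero φ) (map_one φ)]
  constructor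
  · exact fun h => ⟨Matrix.ext fun i j => h (.left i j), Matrix.ext fun i j => h (.right i j)⟩
  · rintro ⟨hleft, hright⟩ _ _ (⟨i, j⟩ | ⟨i, j⟩)
    · exact congrFun₂ hleft i j
    · exact congrFun₂ hright i j

theorem forall_BRel_iff_isIsometryMatrix (hE : IsUnit E.det) (hF : IsUnit F.det)
    (φ : FreeAlgebra k (Fin m × Fin n) →ₐ[k] A) :
    (∀ ⦃x y⦄, BRel k E F x y → φ x = φ y) ↔ IsIsometryMatrix E F ((gens k m n).map φ) :=
  (forall_BRel_iff φ).trans (isIsometryMatrix_iff hE hF).symm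

theorem isIsometryMatrix_ZMat (hE : IsUnit E.det) (hF : IsUnit F.det) :
    IsIsometryMatrix E F (ZMat k E F) :=
  (forall_BRel_iff_isIsometryMatrix hE hF (RingQuot.mkAlgHom k (BRel k E F))).1
    fun _ _ h => RingQuot.mkAlgHom_rel k h

theorem exists_algHom_ZMat_eq (hE : IsUnit E.det) (hF : IsUnit F.det)
    {Z : Matrix (Fin m) (Fin n) A} (hZ : IsIsometryMatrix E F Z) :
    ∃ φ : BB k E F →ₐ[k] A, ∀ i j, φ (ZMat k E F i j) = Z i j := by
  let ψ : FreeAlgebra k (Fin m × Fin n) →ₐ[k] A := FreeAlgebra.lift k fun ij => Z ij.1 ij.2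
  have gens_map : (gens k m n).map ψ = Z :=
    Matrix.ext fun i j => FreeAlgebra.lift_ι_apply _ (i, j)
  have hψ : ∀ ⦃x y⦄, BRel k E F x y → ψ x = ψ y :=
    (forall_BRel_iff_isIsometryMatrix hE hF ψ).2 (gens_map.symm ▸ hZ)
  refine ⟨RingQuot.liftAlgHom k ⟨ψ, hψ⟩, fun i j => ?_⟩
  calc RingQuot.liftAlgHom k ⟨ψ, hψ⟩ (ZMat k E F i j)
      = ψ (gens k m n i j) := RingQuot.liftAlgHom_mkAlgHom_apply k ψ hψ _
    _ = Z i j := congrFun₂ gens_map i j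

theorem BB_delta_hom_general (hE : IsUnit E.det) (hF : IsUnit F.det) (hG : IsUnit G.det) :
    ∃ δ : BB k E F →ₐ[k] (BB k E G ⊗[k] BB k G F),
      ∀ i j, δ (ZMat k E F i j) = ∑ l, ZMat k E G i l ⊗ₜ[k] ZMat k G F l j := by
  let inl : BB k E G →ₐ[k] BB k E G ⊗[k] BB k G F := Algebra.TensorProduct.includeLeft
  let inr : BB k G F →ₐ[k] BB k E G ⊗[k] BB k G F := Algebra.TensorProduct.includeRight
  have inl_commute_inr (x : BB k E G) (y : BB k G F) : Commute (inl x) (inr y) :=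
    (Commute.one_right x).tmul (Commute.one_left y)
  have isometry_mul : IsIsometryMatrix E F ((ZMat k E G).map inl * (ZMat k G F).map inr) :=
    ((isIsometryMatrix_ZMat hE hG).map inl).mul ((isIsometryMatrix_ZMat hG hF).map inr)
      fun _ _ _ => inl_commute_inr _ _
  obtain ⟨δ, hδ⟩ := exists_algHom_ZMat_eq hE hF isometry_mul
  refine ⟨δ, fun i j => ?_⟩
  simp [hδ, mul_apply, inl, inr]

theorem isUnit_det_Eqm {q : k} (hq : q ≠ 0) : IsUnit (Eqm k q).det := by
  simp [Eqm, det_fin_two, hq]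

end

/-- **Statement 14.** If `q ∈ k*` satisfies `q² + tr(E·ᵀE⁻¹)·q + 1 = 0`, there is an
algebra homomorphism `δ : B(E,F) → B(E,E_q) ⊗ B(E_q,F)` with
`δ(z i j) = ∑ l, v i l ⊗ w l j`. -/
theorem BB_delta_hom {m n : ℕ}
    (E : Matrix (Fin m) (Fin m) k) (F : Matrix (Fin n) (Fin n) k)
    (hE : IsUnit E.det) (hF : IsUnit F.det) (q : k) (hq : q ≠ 0)
    (htr : q ^ 2 + (E * E⁻¹ᵀ).trace * q + 1 = 0) :
    ∃ δ : BB k E F →ₐ[k] (BB k E (Eqm k q) ⊗[k] BB k (Eqm k q) F),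
      ∀ i j, δ (ZMat k E F i j) =
        ∑ l, ZMat k E (Eqm k q) i l ⊗ₜ[k] ZMat k (Eqm k q) F l j :=
  BB_delta_hom_general hE hF (isUnit_det_Eqm hq)
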